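/- arXiv:2406.10850 — 7 statements merged into one kernel-verified Lean document; each statement's English description precedes it below -/
import Mathlib

section
/- Let b be a prime, s ≥ 1, t ≥ 0 and m ≥ t be integers, and let C_1,…,C_s be generating matrices of a digital (t,s)-sequence over F_b. Let 0 = w_1 ≤ w_2 ≤ ⋯ ≤ w_s be reduction indices and let C̃_1^{(m)},…,C̃_s^{(m)} be the corresponding column reduced matrices. Then ρ_m(C̃_1^{(m)},…,C̃_s^{(m)}) ≥ max{0, m − w_s − t}; that is, if m − w_s − t ≥ 0, then for every choice of nonnegative integers d_1,…,d_s with d_1+⋯+d_s = m − w_s − t, the family consisting of the first d_1 rows of C̃_1^{(m)}, …, and the first d_s rows of C̃_s^{(m)} is linearly independent over F_b. -/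
open Finset

/-- The family consisting of the first `d j` rows of each of the matrices `C j`
(a row index `≥ m` yields the zero vector). -/
def rowFamily {b s m : ℕ} (C : Fin s → Matrix (Fin m) (Fin m) (ZMod b))
    (d : Fin s → ℕ) : (Σ j : Fin s, Fin (d j)) → (Fin m → ZMod b) :=
  fun p r => if h : (p.2 : ℕ) < m then C p.1 ⟨(p.2 : ℕ), h⟩ r else 0

/-- The first `d j` rows of the matrices `C j` are linearly independent over `𝔽_b`. -/
def RowsLI {b s m : ℕ} (C : Fin s → Matrix (Fin m) (Fin m) (ZMod b))
    (d : Fin s → ℕ) : Prop :=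
  LinearIndependent (ZMod b) (rowFamily C d)

/-- The linear independence parameter `ρ_m(C_1, …, C_s)`: the largest `ρ` such that for
every choice of nonnegative integers `d_1 + ⋯ + d_s = ρ`, the corresponding first rows
of the matrices are linearly independent. -/
noncomputable def rho {b s m : ℕ} (C : Fin s → Matrix (Fin m) (Fin m) (ZMod b)) : ℕ :=
  sSup {ρ : ℕ | ∀ d : Fin s → ℕ, ∑ j, d j = ρ → RowsLI C d}

/-- Left upper `k × k` submatrix of an infinite matrix. -/
def upperLeft {b : ℕ} (C : Matrix ℕ ℕ (ZMod b)) (k : ℕ) :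
    Matrix (Fin k) (Fin k) (ZMod b) :=
  Matrix.of fun i r => C (i : ℕ) (r : ℕ)

/-- Column reduction with reduction index `w`: the first `m - min m w` columns are kept,
the last `min m w` columns are set to zero. -/
def colReduce {b m : ℕ} (C : Matrix (Fin m) (Fin m) (ZMod b)) (w : ℕ) :
    Matrix (Fin m) (Fin m) (ZMod b) :=
  Matrix.of fun i r => if (r : ℕ) < m - min m w then C i r else 0

/-- `C` is a family of generating matrices of a digital `(t,s)`-sequence over `𝔽_b`. -/
def IsDigitalSeq {b s : ℕ} (C : Fin s → Matrix ℕ ℕ (ZMod b)) (t : ℕ) : Prop :=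
  ∀ k : ℕ, max t 1 ≤ k → k - t ≤ rho (fun j => upperLeft (C j) k)

theorem aux_bdd {b s m : ℕ} (hb : b.Prime) (hs : 1 ≤ s)
    (C : Fin s → Matrix (Fin m) (Fin m) (ZMod b)) :
    BddAbove {ρ : ℕ | ∀ d : Fin s → ℕ, ∑ j, d j = ρ → RowsLI C d} := by
  have : Fact b.Prime := ⟨hb⟩
  refine ⟨m, fun ρ hρ => ?_⟩
  have h := hρ (fun j => if j = (⟨0, by omega⟩ : Fin s) then ρ else 0) (by simp)
  have h2 := LinearIndependent.fintype_card_le_finrank h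
  simpa using h2

theorem aux_empty {b s m : ℕ} (C : Fin s → Matrix (Fin m) (Fin m) (ZMod b))
    (d : Fin s → ℕ) (hd : ∑ j, d j = 0) : RowsLI C d := by
  have h0 : ∀ j, d j = 0 := by simpa using hd
  have : IsEmpty (Σ j : Fin s, Fin (d j)) :=
    ⟨fun p => by have h1 := p.2.2; have h2 := h0 p.1; omega⟩
  exact linearIndependent_empty_type

theorem aux_mono {b s m : ℕ} (C : Fin s → Matrix (Fin m) (Fin m) (ZMod b))
    (d e : Fin s → ℕ) (hde : ∀ j, d j ≤ e j) (h : RowsLI C e) : RowsLI C d := by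
  unfold RowsLI at *
  let f : (Σ j : Fin s, Fin (d j)) → (Σ j : Fin s, Fin (e j)) :=
    Sigma.map id (fun j => Fin.castLE (hde j))
  have hf : Function.Injective f :=
    Function.Injective.sigma_map Function.injective_id (fun j => Fin.castLE_injective (hde j))
  exact h.comp f hf

theorem aux_rho {b s m n : ℕ} (hb : b.Prime) (hs : 1 ≤ s)
    (C : Fin s → Matrix (Fin m) (Fin m) (ZMod b)) (hn : n ≤ rho C)
    (d : Fin s → ℕ) (hd : ∑ j, d j = n) : RowsLI C d := by
  have hmem : rho C ∈ {ρ : ℕ | ∀ d : Fin s → ℕ, ∑ j, d j = ρ → RowsLI C d} :=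
    Nat.sSup_mem ⟨0, fun d hd => aux_empty C d hd⟩ (aux_bdd hb hs C)
  refine aux_mono C d
    (fun j => d j + if j = (⟨0, by omega⟩ : Fin s) then rho C - n else 0)
    (fun j => Nat.le_add_right _ _) (hmem _ ?_)
  rw [Finset.sum_add_distrib, hd]
  simp
  omega

theorem aux_main {b s t m : ℕ} (hb : b.Prime) (hs : 1 ≤ s)
    (C : Fin s → Matrix ℕ ℕ (ZMod b)) (hC : IsDigitalSeq C t)
    (w : Fin s → ℕ) (W : ℕ) (hW : ∀ j, w j ≤ W) (d : Fin s → ℕ)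
    (hd : ∑ j, d j = m - W - t) :
    RowsLI (fun j => colReduce (upperLeft (C j) m) (w j)) d := by
  rcases Nat.eq_zero_or_pos (m - W - t) with h0 | hpos
  · exact aux_empty _ d (hd.trans h0)
  have hLI := aux_rho hb hs _ (hC (m - W) (by omega)) d hd
  have hkm : m - W ≤ m := Nat.sub_le _ _
  unfold RowsLI at *
  refine LinearIndependent.of_comp (LinearMap.funLeft (ZMod b) (ZMod b) (Fin.castLE hkm)) ?_
  convert hLI using 1
  funext p r
  have h1 : d p.1 ≤ ∑ j, d j := Finset.single_le_sum (fun _ _ => Nat.zero_le _) (mem_univ p.1)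
  have h2 := p.2.2
  have h3 := hW p.1
  have h4 := r.2
  have ha : (p.2 : ℕ) < m := by omega
  have hb : (p.2 : ℕ) < m - W := by omega
  have hc : (r : ℕ) < m - min m (w p.1) := by omega
  simp only [Function.comp, LinearMap.funLeft_apply, rowFamily, colReduce, upperLeft,
    Matrix.of_apply, Fin.val_castLE, dif_pos ha, dif_pos hb, if_pos hc]

/-- Theorem (lower bound in Theorem 1): for a digital `(t,s)`-sequence and reduction
indices `0 = w_1 ≤ … ≤ w_s`, one has
`ρ_m(C̃_1^{(m)}, …, C̃_s^{(m)}) ≥ max {0, m - w_s - t}`; that is, if `m - w_s - t ≥ 0`,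
then any choice of first rows with `d_1 + ⋯ + d_s = m - w_s - t` is linearly independent. -/
theorem col_reduced_rho_lower_bound {b s t m : ℕ} (hb : b.Prime) (hs : 1 ≤ s)
    (hm : t ≤ m) (C : Fin s → Matrix ℕ ℕ (ZMod b)) (hC : IsDigitalSeq C t)
    (w : Fin s → ℕ) (hw0 : w ⟨0, by omega⟩ = 0) (hwmono : Monotone w) :
    max 0 ((m : ℤ) - (w ⟨s - 1, by omega⟩ : ℕ) - (t : ℕ)) ≤
      (rho (fun j => colReduce (upperLeft (C j) m) (w j)) : ℤ) ∧
    (w ⟨s - 1, by omega⟩ + t ≤ m →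
      ∀ d : Fin s → ℕ, ∑ j, d j = m - w ⟨s - 1, by omega⟩ - t →
        RowsLI (fun j => colReduce (upperLeft (C j) m) (w j)) d) := by
  have hW : ∀ j, w j ≤ w ⟨s - 1, by omega⟩ := fun j =>
    hwmono (Fin.mk_le_mk.mpr (by omega) : (⟨j.1, j.2⟩ : Fin s) ≤ ⟨s - 1, by omega⟩)
  have key := aux_main (m := m) hb hs C hC w _ hW
  refine ⟨?_, fun _ d hd => key d hd⟩
  have h := le_csSup (aux_bdd hb hs (fun j => colReduce (upperLeft (C j) m) (w j))) key
  change _ ≤ rho _ at h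
  omega
end

section
/- Let b be a prime, s ≥ 1 and m ≥ 1 be integers, and let C_1,…,C_s be generating matrices of a digital (0,s)-sequence over F_b, i.e., ρ_k(C_1^{(k)},…,C_s^{(k)}) = k for every integer k ≥ 1. Let 0 = w_1 ≤ w_2 ≤ ⋯ ≤ w_s be reduction indices with w_s < m, and let C̃_1^{(m)},…,C̃_s^{(m)} be the corresponding column reduced matrices. Then ρ_m(C̃_1^{(m)},…,C̃_s^{(m)}) = m − w_s. -/
open Finset

/-- A family of vectors supported on the first `n` coordinates that is linearly
independent has at most `n` members. -/
lemma card_le_of_supported {b m n : ℕ} [Fact b.Prime] (hn : n ≤ m) {ι : Type} [Fintype ι]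
    (v : ι → Fin m → ZMod b) (hv : LinearIndependent (ZMod b) v)
    (h0 : ∀ i (r : Fin m), n ≤ (r : ℕ) → v i r = 0) : Fintype.card ι ≤ n := by
  let g : (Fin n → ZMod b) →ₗ[ZMod b] (Fin m → ZMod b) :=
    { toFun := fun x r => if h : (r : ℕ) < n then x ⟨r, h⟩ else 0
      map_add' := by
        intro x y
        ext r
        by_cases h : (r : ℕ) < n <;> simp [h]
      map_smul' := by
        intro c x
        ext r
        by_cases h : (r : ℕ) < n <;> simp [h] }
  have hg : v = g ∘ (fun i (r : Fin n) => v i (Fin.castLE hn r)) := by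
    funext i r
    change v i r = if h : (r : ℕ) < n then _ else 0
    by_cases h : (r : ℕ) < n
    · simp [h]
    · simp [h, h0 i r (not_lt.mp h)]
  rw [hg] at hv
  have := (LinearIndependent.of_comp g hv).fintype_card_le_finrank
  simpa using this

/-- Remark after Theorem 1: for a digital `(0,s)`-sequence and reduction indices
`0 = w_1 ≤ … ≤ w_s` with `w_s < m`, one has
`ρ_m(C̃_1^{(m)}, …, C̃_s^{(m)}) = m - w_s`. -/
theorem col_reduced_rho_eq_of_t_zero {b s m : ℕ} (hb : b.Prime) (hs : 1 ≤ s) (hm : 1 ≤ m)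
    (C : Fin s → Matrix ℕ ℕ (ZMod b))
    (hC : ∀ k : ℕ, 1 ≤ k → rho (fun j => upperLeft (C j) k) = k)
    (w : Fin s → ℕ) (hw0 : w ⟨0, by omega⟩ = 0) (hwmono : Monotone w)
    (hws : w ⟨s - 1, by omega⟩ < m) :
    rho (fun j => colReduce (upperLeft (C j) m) (w j)) = m - w ⟨s - 1, by omega⟩ := by
  have : Fact b.Prime := ⟨hb⟩
  obtain ⟨l, hl⟩ : ∃ l : Fin s, l = ⟨s - 1, by omega⟩ := ⟨_, rfl⟩
  rw [← hl] at hws ⊢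
  have hwle : ∀ j, w j ≤ w l := by
    intro j
    apply hwmono
    rw [hl, Fin.le_def]
    have := j.2
    simp only
    omega
  obtain ⟨n, hn⟩ : ∃ n, n = m - w l := ⟨_, rfl⟩
  have hn1 : 1 ≤ n := by omega
  have hnm : n ≤ m := by omega
  rw [← hn]
  -- the value `n` is attained for the unreduced matrices of size `n`
  have hmem : ∀ d : Fin s → ℕ, ∑ j, d j = n → RowsLI (fun j => upperLeft (C j) n) d := by
    have h1 := Nat.sSup_mem
      (s := {ρ : ℕ | ∀ d : Fin s → ℕ, ∑ j, d j = ρ → RowsLI (fun j => upperLeft (C j) n) d})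
      ⟨0, by
        intro d hd
        have hd0 : ∀ j, d j = 0 := by simpa using hd
        have : IsEmpty (Σ j : Fin s, Fin (d j)) := ⟨fun p => by
          have := p.2.2
          have h3 := hd0 p.1
          omega⟩
        exact linearIndependent_empty_type⟩
      ⟨n, by
        intro ρ hρ
        have h := hρ (Pi.single l ρ) (by simp)
        have h2 := card_le_of_supported le_rfl _ h
          (fun i r hr => absurd r.2 (not_lt.mpr hr))
        simpa using h2⟩
    have h2 := hC n hn1
    unfold rho at h2
    rw [h2] at h1
    exact h1
  have hup : IsGreatest {ρ : ℕ | ∀ d : Fin s → ℕ, ∑ j, d j = ρ →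
      RowsLI (fun j => colReduce (upperLeft (C j) m) (w j)) d} n := by
    constructor
    · intro d hd
      have h : LinearIndependent (ZMod b) _ := hmem d hd
      apply LinearIndependent.of_comp (LinearMap.funLeft (ZMod b) (ZMod b) (Fin.castLE hnm))
      convert h using 1
      funext p r
      have hdj : d p.1 ≤ n := hd ▸ Finset.single_le_sum (f := d) (fun _ _ => Nat.zero_le _)
        (Finset.mem_univ p.1)
      have hp := p.2.2
      have hpn : (p.2 : ℕ) < n := by omega
      have hpm : (p.2 : ℕ) < m := by omega
      have hr : (r : ℕ) < m - min m (w p.1) := by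
        have := hwle p.1
        have := r.2
        omega
      have hr' : (r : ℕ) < m ∧ (r : ℕ) < m - w p.1 := by omega
      simp only [Function.comp, LinearMap.funLeft_apply, rowFamily, colReduce, upperLeft,
        Matrix.of_apply, Fin.val_castLE, dif_pos hpn, dif_pos hpm, if_pos hr]
    · intro ρ hρ
      have h := hρ (Pi.single l ρ) (by simp)
      have h2 := card_le_of_supported hnm _ h (by
        rintro ⟨j, i⟩ r hr
        by_cases hj : j = l
        · subst hj
          have hr' : ¬ (r : ℕ) < m - min m (w j) := by omega
          simp only [rowFamily, colReduce, Matrix.of_apply, if_neg hr', dite_eq_ite, ite_self]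
        · exfalso
          have := i.2
          simp [Pi.single_eq_of_ne hj] at this)
      simpa using h2
  exact hup.csSup_eq
end

section
/- Let b be a prime and t ≥ 0 an integer. Let D_1, D_2 be generating matrices of a digital (0,2)-sequence over F_b, and let C_1, C_2 be obtained from D_1, D_2 by prepending t zero columns, i.e., C_j(i,r) = 0 for 1 ≤ r ≤ t and C_j(i,r) = D_j(i, r − t) for r > t. Let m ≥ t, let w_1 = 0 and let w_2 be an integer with 0 ≤ w_2 and m − w_2 − t ≥ 0, and let C̃_1^{(m)} = C_1^{(m)} and C̃_2^{(m)} be the column reduction of C_2^{(m)} with reduction index w_2. Then ρ_m(C̃_1^{(m)}, C̃_2^{(m)}) = m − t − w_2; in particular, the first m − t − w_2 + 1 rows of C̃_2^{(m)} are linearly dependent over F_b. -/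
open Finset

lemma rho_mem_of_pos {b s m k : ℕ} (C : Fin s → Matrix (Fin m) (Fin m) (ZMod b))
    (hk : 1 ≤ k) (h : rho C = k) (d : Fin s → ℕ) (hd : ∑ j, d j = k) : RowsLI C d := by
  have hmem : rho C ∈ {ρ : ℕ | ∀ d : Fin s → ℕ, ∑ j, d j = ρ → RowsLI C d} := by
    apply Nat.sSup_mem
    · by_contra hne
      rw [Set.not_nonempty_iff_eq_empty] at hne
      simp only [rho, hne] at h
      simp at h
      omega
    · by_contra hne
      have := csSup_of_not_bddAbove hne
      simp only [rho, this] at h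
      simp at h
      omega
  exact hmem d (hd.trans h.symm)

/-- restriction to the columns `t, …, t + n - 1`. -/
def colProj (b t m n : ℕ) (h : t + n ≤ m) : (Fin m → ZMod b) →ₗ[ZMod b] (Fin n → ZMod b) :=
  LinearMap.funLeft (ZMod b) (ZMod b) (fun r : Fin n => (⟨t + r, by omega⟩ : Fin m))

/-- extension by zero from the columns `t, …, t + n - 1`. -/
def colExt (b t m n : ℕ) : (Fin n → ZMod b) →ₗ[ZMod b] (Fin m → ZMod b) where
  toFun f r := if h : t ≤ (r : ℕ) ∧ (r : ℕ) - t < n then f ⟨r - t, h.2⟩ else 0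
  map_add' f g := by
    ext r
    simp only [Pi.add_apply]
    split_ifs <;> simp
  map_smul' c f := by
    ext r
    simp only [Pi.smul_apply, RingHom.id_apply]
    split_ifs <;> simp

lemma upper_aux {b t m w₂ : ℕ} (hb : b.Prime)
    (D C : Fin 2 → Matrix ℕ ℕ (ZMod b))
    (hC : ∀ (j : Fin 2) (i r : ℕ), C j i r = if r < t then 0 else D j i (r - t))
    (hw : w₂ + t ≤ m) (ρ : ℕ)
    (h : RowsLI ![upperLeft (C 0) m, colReduce (upperLeft (C 1) m) w₂] ![0, ρ]) :
    ρ ≤ m - t - w₂ := by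
  haveI : Fact b.Prime := ⟨hb⟩
  have hn : t + (m - t - w₂) ≤ m := by omega
  set v := rowFamily ![upperLeft (C 0) m, colReduce (upperLeft (C 1) m) w₂] ![0, ρ] with hv
  have key : v = colExt b t m (m - t - w₂) ∘ (colProj b t m _ hn ∘ v) := by
    funext ⟨j, i⟩
    fin_cases j
    · exact i.elim0
    · funext r
      simp only [Function.comp, colExt, colProj, LinearMap.coe_mk, AddHom.coe_mk,
        LinearMap.funLeft_apply]
      split_ifs with h1
      · congr 1
        ext
        simp
        omega
      · simp only [hv, rowFamily]
        split_ifs with h2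
        · simp only [colReduce, upperLeft, Fin.mk_one, Matrix.cons_val_one, Matrix.of_apply,
            Matrix.cons_val_fin_one, hC]
          have := r.2
          split_ifs <;> first | rfl | omega
        · rfl
  have h' : LinearIndependent (ZMod b) v := h
  rw [key] at h'
  have h3 := (LinearIndependent.of_comp _ h').fintype_card_le_finrank
  simpa using h3

lemma lower_aux {b t m w₂ : ℕ}
    (D C : Fin 2 → Matrix ℕ ℕ (ZMod b))
    (hD : ∀ k : ℕ, 1 ≤ k → rho (fun j => upperLeft (D j) k) = k)
    (hC : ∀ (j : Fin 2) (i r : ℕ), C j i r = if r < t then 0 else D j i (r - t))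
    (hw : w₂ + t ≤ m) (d : Fin 2 → ℕ) (hd : ∑ j, d j = m - t - w₂) :
    RowsLI ![upperLeft (C 0) m, colReduce (upperLeft (C 1) m) w₂] d := by
  have hn : t + (m - t - w₂) ≤ m := by omega
  have hle : ∀ j, d j ≤ m - t - w₂ := fun j => by
    rw [← hd]
    exact Finset.single_le_sum (fun _ _ => Nat.zero_le _) (Finset.mem_univ j)
  rcases Nat.eq_zero_or_pos (m - t - w₂) with h0 | hpos
  · haveI : IsEmpty (Σ j : Fin 2, Fin (d j)) := ⟨fun ⟨j, i⟩ => by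
      have := hle j
      have := i.2
      omega⟩
    exact linearIndependent_empty_type
  · have hLI := rho_mem_of_pos _ hpos (hD _ hpos) d hd
    apply LinearIndependent.of_comp (colProj b t m _ hn)
    unfold RowsLI at hLI
    convert hLI using 1
    funext ⟨j, i⟩
    funext r
    have h1 := hle j
    have h2 := i.2
    have h3 : (i : ℕ) < m := by omega
    have h4 : (i : ℕ) < m - t - w₂ := by omega
    have h5 := r.2
    have h6 : t + (r : ℕ) < m - min m w₂ := by omega
    simp only [Function.comp, colProj, LinearMap.funLeft_apply, rowFamily, h3, h4, dif_pos]
    fin_cases j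
    · simp [upperLeft, hC]
    · simp [upperLeft, colReduce, hC]
      omega

/-- Remark 2 (sharpness of the lower bound): for the `(t,2)`-sequence obtained by
prepending `t` zero columns to a digital `(0,2)`-sequence, with reduction indices
`w_1 = 0` and `w_2` with `m - w_2 - t ≥ 0`, one has
`ρ_m(C̃_1^{(m)}, C̃_2^{(m)}) = m - t - w_2`; in particular the first `m - t - w_2 + 1`
rows of `C̃_2^{(m)}` are linearly dependent. -/
theorem prepend_zero_cols_reduced_rho_eq {b t m w₂ : ℕ} (hb : b.Prime)
    (D C : Fin 2 → Matrix ℕ ℕ (ZMod b))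
    (hD : ∀ k : ℕ, 1 ≤ k → rho (fun j => upperLeft (D j) k) = k)
    (hC : ∀ (j : Fin 2) (i r : ℕ), C j i r = if r < t then 0 else D j i (r - t))
    (hm : t ≤ m) (hw : w₂ + t ≤ m) :
    rho ![upperLeft (C 0) m, colReduce (upperLeft (C 1) m) w₂] = m - t - w₂ ∧
    ¬ RowsLI ![upperLeft (C 0) m, colReduce (upperLeft (C 1) m) w₂]
        ![0, m - t - w₂ + 1] := by
  refine ⟨?_, fun h => ?_⟩
  · apply IsGreatest.csSup_eq
    refine ⟨fun d hd => lower_aux D C hD hC hw d hd, fun ρ hρ => ?_⟩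
    exact upper_aux hb D C hC hw ρ (hρ ![0, ρ] (by simp))
  · have := upper_aux hb D C hC hw _ h
    omega
end

section
/- Let b be a prime and t ≥ 0 an integer. Let D_1, D_2 be generating matrices of a digital (0,2)-sequence over F_b. Define infinite matrices E_1, E_2 over F_b by: E_1(i,r) = 0 for 1 ≤ r ≤ t and E_1(i,r) = D_1(i, r − t) for r > t; and E_2(i,r) = D_2(i,r) for i ≤ t and r ≤ t, E_2(i,r) = 0 for i ≤ t and r > t, E_2(i,r) = 0 for i > t and r ≤ t, and E_2(i,r) = D_2(i − t, r − t) for i > t and r > t. Then E_1, E_2 are generating matrices of a strict digital (t,2)-sequence over F_b: (a) for every integer m ≥ max{t,1} and all nonnegative integers d_1, d_2 with d_1 + d_2 = m − t, the first d_1 rows of E_1^{(m)} together with the first d_2 rows of E_2^{(m)} are linearly independent over F_b; and (b) if t ≥ 1 then ρ_t(E_1^{(t)}, E_2^{(t)}) = 0, since E_1^{(t)} is the zero matrix. -/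
open Finset

/-- Reformulation of row independence with sums over ranges. -/
lemma rowsLI_iff_ranges {b m : ℕ} (C : Fin 2 → Matrix ℕ ℕ (ZMod b)) (d : Fin 2 → ℕ)
    (h0 : d 0 ≤ m) (h1 : d 1 ≤ m) :
    RowsLI (fun j => upperLeft (C j) m) d ↔
      ∀ a0 a1 : ℕ → ZMod b,
        (∀ r < m, ∑ i ∈ range (d 0), a0 i * C 0 i r + ∑ i ∈ range (d 1), a1 i * C 1 i r = 0) →
        (∀ i < d 0, a0 i = 0) ∧ (∀ i < d 1, a1 i = 0) := by
  have key : ∀ g : (Σ j : Fin 2, Fin (d j)) → ZMod b, ∀ r : Fin m,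
      (∑ p, g p • rowFamily (fun j => upperLeft (C j) m) d p) r =
      ∑ i : Fin (d 0), g ⟨0, i⟩ * C 0 i r + ∑ i : Fin (d 1), g ⟨1, i⟩ * C 1 i r := by
    intro g r
    rw [Finset.sum_apply, Fintype.sum_sigma, Fin.sum_univ_two]
    congr 1
    · refine Finset.sum_congr rfl fun i _ => ?_
      have : (i : ℕ) < m := lt_of_lt_of_le i.2 h0
      simp [rowFamily, upperLeft, this]
    · refine Finset.sum_congr rfl fun i _ => ?_
      have : (i : ℕ) < m := lt_of_lt_of_le i.2 h1
      simp [rowFamily, upperLeft, this]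
  unfold RowsLI
  rw [Fintype.linearIndependent_iff]
  constructor
  · intro H a0 a1 h
    have := H (fun p => if p.1 = 0 then a0 p.2 else a1 p.2) (by
      funext r
      rw [key]
      have := h r r.2
      rw [Finset.sum_range, Finset.sum_range] at this
      simpa using this)
    exact ⟨fun i hi => by simpa using this ⟨0, ⟨i, hi⟩⟩,
      fun i hi => by simpa using this ⟨1, ⟨i, hi⟩⟩⟩
  · intro H g hg
    have := H (fun i => if h : i < d 0 then g ⟨0, ⟨i, h⟩⟩ else 0)
      (fun i => if h : i < d 1 then g ⟨1, ⟨i, h⟩⟩ else 0) (by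
        intro r hr
        have h2 := key g ⟨r, hr⟩
        rw [hg] at h2
        rw [Finset.sum_range, Finset.sum_range]
        simpa using h2.symm)
    rintro ⟨j, i⟩
    fin_cases j
    · simpa using this.1 i i.2
    · simpa using this.2 i i.2

/-- The defining property of a digital `(0,2)`-sequence, in range form. -/
lemma rho_eq_ranges {b k : ℕ} (D : Fin 2 → Matrix ℕ ℕ (ZMod b)) (hk : 1 ≤ k)
    (h : rho (fun j => upperLeft (D j) k) = k) (e0 e1 : ℕ) (he : e0 + e1 = k)
    (a0 a1 : ℕ → ZMod b)
    (hz : ∀ r < k, ∑ i ∈ range e0, a0 i * D 0 i r + ∑ i ∈ range e1, a1 i * D 1 i r = 0) :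
    (∀ i < e0, a0 i = 0) ∧ (∀ i < e1, a1 i = 0) := by
  unfold rho at h
  set S := {ρ : ℕ | ∀ d : Fin 2 → ℕ, ∑ j, d j = ρ → RowsLI (fun j => upperLeft (D j) k) d} with hS
  have hbdd : BddAbove S := by
    by_contra hc
    rw [Nat.sSup_of_not_bddAbove hc] at h
    omega
  have hne : S.Nonempty := by
    rw [Set.nonempty_iff_ne_empty]
    intro hc
    rw [hc] at h
    simp at h
    omega
  have hmem := Nat.sSup_mem hne hbdd
  rw [h] at hmem
  have hli := hmem ![e0, e1] (by simpa [Fin.sum_univ_two] using he)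
  rw [rowsLI_iff_ranges D ![e0, e1] (by simp; omega) (by simp; omega)] at hli
  simpa using hli a0 a1 (by simpa using hz)

/-- Remark 3 (construction): the matrices `E_1, E_2` built from a digital
`(0,2)`-sequence generate a strict digital `(t,2)`-sequence:
(a) for every `m ≥ max {t,1}` and all `d_1 + d_2 = m - t` the corresponding first rows
of `E_1^{(m)}` and `E_2^{(m)}` are linearly independent, and
(b) if `t ≥ 1` then `ρ_t(E_1^{(t)}, E_2^{(t)}) = 0`, since `E_1^{(t)}` is the zero
matrix. -/
theorem strict_t_seq_construction {b t : ℕ} (hb : b.Prime)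
    (D E : Fin 2 → Matrix ℕ ℕ (ZMod b))
    (hD : ∀ k : ℕ, 1 ≤ k → rho (fun j => upperLeft (D j) k) = k)
    (hE1 : ∀ i r : ℕ, E 0 i r = if r < t then 0 else D 0 i (r - t))
    (hE2 : ∀ i r : ℕ, E 1 i r =
      if i < t then (if r < t then D 1 i r else 0)
      else (if r < t then 0 else D 1 (i - t) (r - t))) :
    (∀ m : ℕ, max t 1 ≤ m → ∀ d : Fin 2 → ℕ, d 0 + d 1 = m - t →
      RowsLI (fun j => upperLeft (E j) m) d) ∧
    (1 ≤ t → rho (fun j => upperLeft (E j) t) = 0 ∧ upperLeft (E 0) t = 0) := by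
  refine ⟨?_, ?_⟩
  · intro m hm d hd
    have htm : t ≤ m := le_trans (le_max_left _ _) hm
    rw [rowsLI_iff_ranges E d (by omega) (by omega)]
    intro a0 a1 h
    set a : ℕ → ZMod b := fun i => if i < d 1 then a1 i else 0 with ha
    have hsum : ∀ r, ∑ i ∈ range (d 1), a1 i * E 1 i r =
        ∑ i ∈ range t, a i * E 1 i r + ∑ i ∈ range (d 1), a (t + i) * E 1 (t + i) r := by
      intro r
      rw [← Finset.sum_range_add (fun i => a i * E 1 i r), add_comm t, Finset.sum_range_add]
      rw [Finset.sum_eq_zero (s := range t) (fun i _ => by simp [ha]), add_zero]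
      exact Finset.sum_congr rfl fun i hi => by simp [ha, Finset.mem_range.1 hi]
    have hA : ∀ i < t, a i = 0 := by
      rcases Nat.eq_zero_or_pos t with h0 | ht
      · intro i hi; omega
      refine (rho_eq_ranges D ht (hD t ht) 0 t (by simp) 0 a ?_).2
      intro r hr
      have h2 := h r (by omega)
      rw [hsum, Finset.sum_eq_zero (s := range (d 0)) (fun i _ => by simp [hE1, hr]),
        Finset.sum_eq_zero (s := range (d 1)) (fun i _ => by simp [hE2, hr]), zero_add,
        add_zero] at h2
      simp only [range_zero, sum_empty, zero_add]
      rw [← h2]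
      exact Finset.sum_congr rfl fun i hi => by simp [hE2, hr, Finset.mem_range.1 hi]
    have hB : (∀ i < d 0, a0 i = 0) ∧ (∀ i < d 1, a (t + i) = 0) := by
      rcases Nat.eq_zero_or_pos (m - t) with h0 | hn
      · exact ⟨fun i hi => by omega, fun i hi => by omega⟩
      refine rho_eq_ranges D hn (hD (m - t) hn) (d 0) (d 1) hd a0 (fun i => a (t + i)) ?_
      intro r hr
      have h2 := h (t + r) (by omega)
      rw [hsum, Finset.sum_eq_zero (s := range t)
        (fun i hi => by simp [hA i (Finset.mem_range.1 hi)]), zero_add] at h2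
      simpa [hE1, hE2] using h2
    refine ⟨hB.1, fun i hi => ?_⟩
    have hai : a i = 0 := by
      by_cases hit : i < t
      · exact hA i hit
      · have := hB.2 (i - t) (by omega)
        rwa [Nat.add_sub_cancel' (by omega)] at this
    simpa [ha, hi] using hai
  · intro ht
    refine ⟨?_, ?_⟩
    · haveI : Fact b.Prime := ⟨hb⟩
      refine Nat.le_zero.1 (csSup_le' ?_)
      intro ρ hρ
      by_contra hc
      have hli := hρ ![ρ, 0] (by simp [Fin.sum_univ_two])
      refine hli.ne_zero ⟨0, ⟨0, by simp; omega⟩⟩ ?_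
      funext r
      simp [rowFamily, upperLeft, hE1]
    · ext i r
      simp [upperLeft, hE1]
end

section
/- Let b be a prime and t ≥ 0 an integer, let D_1, D_2 be generating matrices of a digital (0,2)-sequence over F_b, and let E_1, E_2 be defined by E_1(i,r) = 0 for r ≤ t, E_1(i,r) = D_1(i, r − t) for r > t, and E_2(i,r) = D_2(i,r) for i ≤ t, r ≤ t, E_2(i,r) = 0 for i ≤ t, r > t, E_2(i,r) = 0 for i > t, r ≤ t, E_2(i,r) = D_2(i − t, r − t) for i > t, r > t. Let m ≥ t, let w_1 = 0 and let w_2 be an integer with m − w_2 − t ≥ 0 and w_2 ≥ t. Let Ẽ_1^{(m)} = E_1^{(m)} and let Ẽ_2^{(m)} be the column reduction of E_2^{(m)} with reduction index w_2. Then ρ_m(Ẽ_1^{(m)}, Ẽ_2^{(m)}) = m − w_2. -/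
open Finset

/-- Row entries of a finite matrix extended by zero rows. -/
def rowExt {b m : ℕ} (C : Matrix (Fin m) (Fin m) (ZMod b)) (i : ℕ) (r : Fin m) : ZMod b :=
  if h : i < m then C ⟨i, h⟩ r else 0

theorem rowsLI_iff {b m : ℕ} (C : Fin 2 → Matrix (Fin m) (Fin m) (ZMod b)) (d : Fin 2 → ℕ) :
    RowsLI C d ↔ ∀ f g : ℕ → ZMod b,
      (∀ r : Fin m, ∑ i ∈ range (d 0), f i * rowExt (C 0) i r
        + ∑ i ∈ range (d 1), g i * rowExt (C 1) i r = 0) →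
      (∀ i < d 0, f i = 0) ∧ (∀ i < d 1, g i = 0) := by
  unfold RowsLI
  rw [Fintype.linearIndependent_iff]
  constructor
  · intro H f g hfg
    have := H (fun p => if p.1 = 0 then f p.2 else g p.2) (by
      funext r
      rw [Fintype.sum_sigma, Fin.sum_univ_two]
      have h := hfg r
      rw [Finset.sum_range, Finset.sum_range] at h
      simpa [Finset.sum_apply, rowFamily, rowExt] using h)
    refine ⟨fun i hi => ?_, fun i hi => ?_⟩
    · simpa using this ⟨0, ⟨i, hi⟩⟩
    · simpa using this ⟨1, ⟨i, hi⟩⟩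
  · intro H c hc
    have := H (fun i => if h : i < d 0 then c ⟨0, ⟨i, h⟩⟩ else 0)
      (fun i => if h : i < d 1 then c ⟨1, ⟨i, h⟩⟩ else 0) (by
      intro r
      have h := congrFun hc r
      rw [Fintype.sum_sigma, Fin.sum_univ_two] at h
      rw [Finset.sum_range, Finset.sum_range]
      simpa [Finset.sum_apply, rowFamily, rowExt] using h)
    rintro ⟨j, i⟩
    fin_cases j
    · simpa using this.1 i i.2
    · simpa using this.2 i i.2

theorem D_indep {b : ℕ} (D : Fin 2 → Matrix ℕ ℕ (ZMod b))
    (hD : ∀ k : ℕ, 1 ≤ k → rho (fun j => upperLeft (D j) k) = k)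
    (k d e : ℕ) (hde : d + e ≤ k) (f g : ℕ → ZMod b)
    (h : ∀ r < k, ∑ i ∈ range d, f i * D 0 i r + ∑ i ∈ range e, g i * D 1 i r = 0) :
    (∀ i < d, f i = 0) ∧ (∀ i < e, g i = 0) := by
  rcases Nat.eq_zero_or_pos k with hk | hk
  · exact ⟨fun i hi => by omega, fun i hi => by omega⟩
  have hr := hD k hk
  unfold rho at hr
  set S := {ρ : ℕ | ∀ d : Fin 2 → ℕ, ∑ j, d j = ρ → RowsLI (fun j => upperLeft (D j) k) d} with hS
  have hmem : k ∈ S := by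
    rw [← hr]
    apply Nat.sSup_mem
    · by_contra hne
      rw [Set.not_nonempty_iff_eq_empty] at hne
      rw [hne] at hr
      simp at hr
      omega
    · by_contra hne
      rw [csSup_of_not_bddAbove hne] at hr
      simp at hr
      omega
  have h2 := hmem ![k - e, e] (by simp [Fin.sum_univ_two]; omega)
  rw [rowsLI_iff] at h2
  have h3 := h2 (fun i => if i < d then f i else 0) g (by
    intro r
    have hh := h r r.2
    refine Eq.trans ?_ hh
    simp only [Matrix.cons_val_zero, Matrix.cons_val_one]
    congr 1
    · symm
      apply Finset.sum_subset_zero_on_sdiff (Finset.range_mono (by omega))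
      · intro i hi
        simp only [Finset.mem_sdiff, Finset.mem_range] at hi
        simp [hi.2]
      · intro i hi
        simp only [Finset.mem_range] at hi
        have : i < k := by omega
        simp [hi, rowExt, upperLeft, this]
    · apply Finset.sum_congr rfl
      intro i hi
      simp only [Finset.mem_range] at hi
      have : i < k := by omega
      simp [rowExt, upperLeft, this])
  simp only [Matrix.cons_val_zero, Matrix.cons_val_one] at h3
  refine ⟨fun i hi => ?_, h3.2⟩
  simpa [hi] using h3.1 i (by omega)

/-- Remark 3, Case 1 (`max {t, w_2} = w_2`): for the strict `(t,2)`-sequence `E_1, E_2`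
and reduction indices `w_1 = 0` and `t ≤ w_2` with `m - w_2 - t ≥ 0`, one has
`ρ_m(Ẽ_1^{(m)}, Ẽ_2^{(m)}) = m - w_2`. -/
theorem strict_seq_reduced_rho_case_w {b t m w₂ : ℕ} (hb : b.Prime)
    (D E : Fin 2 → Matrix ℕ ℕ (ZMod b))
    (hD : ∀ k : ℕ, 1 ≤ k → rho (fun j => upperLeft (D j) k) = k)
    (hE1 : ∀ i r : ℕ, E 0 i r = if r < t then 0 else D 0 i (r - t))
    (hE2 : ∀ i r : ℕ, E 1 i r =
      if i < t then (if r < t then D 1 i r else 0)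
      else (if r < t then 0 else D 1 (i - t) (r - t)))
    (hm : t ≤ m) (hw : w₂ + t ≤ m) (hwt : t ≤ w₂) :
    rho ![upperLeft (E 0) m, colReduce (upperLeft (E 1) m) w₂] = m - w₂ := by
  have : Fact b.Prime := ⟨hb⟩
  unfold rho
  apply IsGreatest.csSup_eq
  constructor
  · intro d hd
    rw [Fin.sum_univ_two] at hd
    rw [rowsLI_iff]
    intro f g h
    obtain ⟨p, hp⟩ : ∃ p, p = d 0 := ⟨_, rfl⟩
    obtain ⟨q, hq⟩ : ∃ q, q = d 1 := ⟨_, rfl⟩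
    rw [← hp, ← hq] at h ⊢
    rw [← hp, ← hq] at hd
    have h' : ∀ r < m, ∑ i ∈ range p, f i * E 0 i r
        + ∑ i ∈ range q, g i * (if r < m - w₂ then E 1 i r else 0) = 0 := by
      intro r hr
      refine Eq.trans ?_ (h ⟨r, hr⟩)
      congr 1
      · apply Finset.sum_congr rfl
        intro i hi
        simp only [Finset.mem_range] at hi
        have : i < m := by omega
        simp [rowExt, upperLeft, this]
      · apply Finset.sum_congr rfl
        intro i hi
        simp only [Finset.mem_range] at hi
        have : i < m := by omega
        have hmin : min m w₂ = w₂ := by omega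
        simp [rowExt, upperLeft, colReduce, this, hmin]
    clear h
    have hg : ∀ i < min q t, g i = 0 := by
      refine (D_indep D hD t 0 (min q t) (by omega) f g ?_).2
      intro r hr
      have hh := h' r (by omega)
      refine Eq.trans ?_ hh
      congr 1
      · symm
        rw [Finset.range_zero, Finset.sum_empty]
        apply Finset.sum_eq_zero
        intro i _
        simp [hE1, hr]
      · apply Finset.sum_subset_zero_on_sdiff (Finset.range_mono (by omega))
        · intro i hi
          simp only [Finset.mem_sdiff, Finset.mem_range] at hi
          have : ¬ i < t := by omega
          simp [hE2, this, hr]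
        · intro i hi
          simp only [Finset.mem_range] at hi
          have h1 : i < t := by omega
          have h2 : r < m - w₂ := by omega
          simp [hE2, h1, h2, hr]
    rcases le_total q t with hqt | hqt
    · have hg' : ∀ i < q, g i = 0 := fun i hi => hg i (by omega)
      refine ⟨(D_indep D hD (m - t) p 0 (by omega) f g ?_).1, hg'⟩
      intro r hr
      have hh := h' (r + t) (by omega)
      refine Eq.trans ?_ hh
      congr 1
      · simp [hE1]
      · symm
        rw [Finset.range_zero, Finset.sum_empty]
        apply Finset.sum_eq_zero
        intro i hi
        simp [hg' i (Finset.mem_range.1 hi)]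
    · obtain ⟨e, rfl⟩ := Nat.exists_eq_add_of_le hqt
      have key := D_indep D hD (m - w₂ - t) p e (by omega) f (fun i => g (t + i)) (by
        intro r hr
        have hh := h' (r + t) (by omega)
        refine Eq.trans ?_ hh
        rw [Finset.sum_range_add]
        have hz : ∑ i ∈ range t, g i * (if r + t < m - w₂ then E 1 i (r + t) else 0) = 0 := by
          apply Finset.sum_eq_zero
          intro i hi
          simp only [Finset.mem_range] at hi
          simp [hg i (by omega)]
        rw [hz, zero_add]
        have h2 : r + t < m - w₂ := by omega
        congr 1
        · simp [hE1]
        · simp [hE2, h2])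
      refine ⟨key.1, fun i hi => ?_⟩
      rcases lt_or_ge i t with hit | hit
      · exact hg i (by omega)
      · have := key.2 (i - t) (by omega)
        simpa [Nat.add_sub_cancel' hit] using this
  · intro ρ hρ
    have h := hρ ![0, ρ] (by simp)
    rw [rowsLI_iff] at h
    set R := rowExt (colReduce (upperLeft (E 1) m) w₂) with hR
    have hli : LinearIndependent (ZMod b)
        (fun (i : Fin ρ) (r : Fin (m - w₂)) => R i ⟨r, by omega⟩) := by
      rw [Fintype.linearIndependent_iff]
      intro c hc i
      have := (h 0 (fun i => if h : i < ρ then c ⟨i, h⟩ else 0) (by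
        intro r
        simp only [Matrix.cons_val_zero, Matrix.cons_val_one, Finset.range_zero,
          Finset.sum_empty, zero_add]
        rw [← hR, Finset.sum_range]
        by_cases hr : (r : ℕ) < m - w₂
        · have := congrFun hc ⟨r, hr⟩
          simpa [Finset.sum_apply] using this
        · apply Finset.sum_eq_zero
          intro i _
          have hmin : min m w₂ = w₂ := by omega
          have : R i r = 0 := by simp [hR, rowExt, colReduce, hmin, hr]
          rw [this, mul_zero])).2 i (by simp)
      simpa using this
    have := hli.fintype_card_le_finrank
    simpa using this
end

section
/- Let b be a prime, s ≥ 1 an integer, ∅ ≠ u ⊆ {1,…,s} a nonempty subset with ū := max(u), and t_u ≥ 0 an integer. Let C_1,…,C_s be infinite matrices over F_b such that the subfamily (C_j)_{j∈u} satisfies the digital sequence condition with parameter t_u: for every integer k ≥ max{t_u,1} and all nonnegative integers (d_j)_{j∈u} with Σ_{j∈u} d_j = k − t_u, the families of the first d_j rows of C_j^{(k)}, j ∈ u, are jointly linearly independent over F_b. Let m ≥ t_u, let 0 = w_1 ≤ w_2 ≤ ⋯ ≤ w_s be reduction indices, and let C̃_j^{(m)} be the corresponding column reduced matrices. Then ρ_m((C̃_j^{(m)})_{j∈u})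 ≥ max{0, m − w_ū − t_u}; that is, if m − w_ū − t_u ≥ 0, then for all nonnegative integers (d_j)_{j∈u} with Σ_{j∈u} d_j = m − w_ū − t_u, the first d_j rows of C̃_j^{(m)}, j ∈ u, are jointly linearly independent over F_b. -/
open Finset

/-- The linear independence parameter `ρ_m((C_j)_{j ∈ u})` of the subfamily of matrices
indexed by `u`: tuples `(d_j)_{j ∈ u}` are encoded as functions `d : Fin s → ℕ`
vanishing outside `u`. -/
noncomputable def rhoOn {b s m : ℕ} (u : Finset (Fin s))
    (C : Fin s → Matrix (Fin m) (Fin m) (ZMod b)) : ℕ :=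
  sSup {ρ : ℕ | ∀ d : Fin s → ℕ, (∀ j ∉ u, d j = 0) → ∑ j, d j = ρ → RowsLI C d}

/-- Corollary (lower bound for projections): if the subfamily `(C_j)_{j ∈ u}` satisfies
the digital sequence condition with parameter `t_u`, then for the column reduced
matrices `ρ_m((C̃_j^{(m)})_{j ∈ u}) ≥ max {0, m - w_ū - t_u}`; that is, if
`m - w_ū - t_u ≥ 0`, then all choices of first rows with `∑_{j ∈ u} d_j = m - w_ū - t_u`
are jointly linearly independent. -/
theorem col_reduced_rho_lower_bound_proj {b s tu m : ℕ} (hb : b.Prime) (hs : 1 ≤ s)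
    (u : Finset (Fin s)) (hu : u.Nonempty)
    (C : Fin s → Matrix ℕ ℕ (ZMod b))
    (hC : ∀ k : ℕ, max tu 1 ≤ k → ∀ d : Fin s → ℕ, (∀ j ∉ u, d j = 0) →
      ∑ j, d j = k - tu → RowsLI (fun j => upperLeft (C j) k) d)
    (hm : tu ≤ m)
    (w : Fin s → ℕ) (hw0 : w ⟨0, by omega⟩ = 0) (hwmono : Monotone w) :
    max 0 ((m : ℤ) - (w (u.max' hu) : ℕ) - (tu : ℕ)) ≤
      (rhoOn u (fun j => colReduce (upperLeft (C j) m) (w j)) : ℤ) ∧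
    (w (u.max' hu) + tu ≤ m →
      ∀ d : Fin s → ℕ, (∀ j ∉ u, d j = 0) → ∑ j, d j = m - w (u.max' hu) - tu →
        RowsLI (fun j => colReduce (upperLeft (C j) m) (w j)) d) := by
  haveI : Fact b.Prime := ⟨hb⟩
  have key : w (u.max' hu) + tu ≤ m →
      ∀ d : Fin s → ℕ, (∀ j ∉ u, d j = 0) → ∑ j, d j = m - w (u.max' hu) - tu →
        RowsLI (fun j => colReduce (upperLeft (C j) m) (w j)) d := by
    intro hle d hd hsum
    have hdj : ∀ j, d j ≤ m - w (u.max' hu) - tu := fun j =>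
      hsum ▸ Finset.single_le_sum (f := d) (fun _ _ => Nat.zero_le _) (Finset.mem_univ j)
    by_cases hk : m - w (u.max' hu) = 0
    · haveI : IsEmpty (Σ j : Fin s, Fin (d j)) := by
        refine ⟨fun p => ?_⟩
        have h1 := hdj p.1
        have h2 := p.2.isLt
        omega
      exact linearIndependent_empty_type
    · have h := hC (m - w (u.max' hu)) (by omega) d hd hsum
      have hkm : m - w (u.max' hu) ≤ m := Nat.sub_le _ _
      unfold RowsLI at h ⊢
      refine LinearIndependent.of_comp
        (LinearMap.funLeft (ZMod b) (ZMod b) (Fin.castLE hkm)) ?_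
      convert h using 1
      funext p r
      have h1 := hdj p.1
      have h2 := p.2.isLt
      have hpu : p.1 ∈ u := by
        by_contra hn
        have := hd p.1 hn
        omega
      have hw : w p.1 ≤ w (u.max' hu) := hwmono (Finset.le_max' u _ hpu)
      have hr := r.isLt
      have hp1 : (p.2 : ℕ) < m := by omega
      have hp2 : (p.2 : ℕ) < m - w (u.max' hu) := by omega
      have hr2 : (r : ℕ) < m - min m (w p.1) := by omega
      have e1 : rowFamily (fun j => colReduce (upperLeft (C j) m) (w j)) d p
          (Fin.castLE hkm r) = C p.1 p.2 r := by
        simp only [rowFamily, dif_pos hp1, colReduce, upperLeft, Matrix.of_apply,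
          Fin.val_castLE, if_pos hr2]
      have e2 : rowFamily (fun j => upperLeft (C j) (m - w (u.max' hu))) d p r
          = C p.1 p.2 r := by
        simp only [rowFamily, dif_pos hp2, upperLeft, Matrix.of_apply]
      rw [e2, ← e1]
      rfl
  refine ⟨?_, key⟩
  by_cases hle : w (u.max' hu) + tu ≤ m
  · have hb' : m - w (u.max' hu) - tu ≤
        rhoOn u (fun j => colReduce (upperLeft (C j) m) (w j)) := by
      refine le_csSup ⟨m, ?_⟩ (key hle)
      intro ρ hρ
      obtain ⟨j0, hj0⟩ := hu
      have h := hρ (Pi.single j0 ρ)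
        (fun j hj => Pi.single_eq_of_ne (by rintro rfl; exact hj hj0) _) (by simp)
      have h3 := LinearIndependent.fintype_card_le_finrank h
      simpa [Fintype.card_sigma] using h3
    omega
  · omega
end

section
/- Let b ≥ 2 and s ≥ 1 be integers, let γ_1 ≥ γ_2 ≥ ⋯ ≥ γ_s > 0 be reals, and let j_0 ∈ {0,1,…,s} be such that γ_j ≥ 1 for all j ≤ j_0 and γ_j ≤ 1 for all j > j_0. Let κ be a real number with κ > γ_1^{j_0}, and let w_1,…,w_s be nonnegative integers satisfying γ_j b^{w_j} ≤ (κ / γ_1^{j_0})^{1/s} − 1 for every j ∈ {1,…,s}. Then ∏_{j=1}^{s} γ_j (1 + b^{w_j}) ≤ κ. -/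
open Finset

/-- Sufficiency of the choice of reduction indices: for product weights
`γ_1 ≥ γ_2 ≥ ⋯ ≥ γ_s > 0` with `γ_j ≥ 1` for `j ≤ j_0` and `γ_j ≤ 1` for `j > j_0`,
and `κ > γ_1^{j_0}`, if the reduction indices satisfy
`γ_j b^{w_j} ≤ (κ / γ_1^{j_0})^{1/s} - 1` for all `j`, then
`∏_{j=1}^{s} γ_j (1 + b^{w_j}) ≤ κ`. -/
theorem weight_product_kappa_bound {b s j₀ : ℕ} (hb : 2 ≤ b) (hs : 1 ≤ s) (hj₀ : j₀ ≤ s)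
    (γ : ℕ → ℝ) (hpos : ∀ j ∈ Finset.Icc 1 s, 0 < γ j)
    (hmono : ∀ i j : ℕ, 1 ≤ i → i ≤ j → j ≤ s → γ j ≤ γ i)
    (hge : ∀ j : ℕ, 1 ≤ j → j ≤ j₀ → 1 ≤ γ j)
    (hle : ∀ j : ℕ, j₀ < j → j ≤ s → γ j ≤ 1)
    (κ : ℝ) (hκ : γ 1 ^ j₀ < κ)
    (w : ℕ → ℕ)
    (hw : ∀ j ∈ Finset.Icc 1 s,
      γ j * (b : ℝ) ^ (w j) ≤ (κ / γ 1 ^ j₀) ^ ((1 : ℝ) / s) - 1) :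
    ∏ j ∈ Finset.Icc 1 s, γ j * (1 + (b : ℝ) ^ (w j)) ≤ κ := by
  have h1 : 0 < γ 1 := hpos 1 (Finset.mem_Icc.2 ⟨le_rfl, hs⟩)
  have hp : 0 < γ 1 ^ j₀ := pow_pos h1 _
  set R : ℝ := (κ / γ 1 ^ j₀) ^ ((1 : ℝ) / s) with hR
  have hRs : R ^ s = κ / γ 1 ^ j₀ := by
    rw [hR, one_div]
    exact Real.rpow_inv_natCast_pow (div_pos (hp.trans hκ) hp).le (by omega)
  have key : ∀ j ∈ Finset.Icc 1 s,
      γ j * (1 + (b : ℝ) ^ (w j)) ≤ (if j ≤ j₀ then γ 1 else 1) * R := by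
    intro j hj
    have hwj := hw j hj
    have hgj := hpos j hj
    obtain ⟨hj1, hjs⟩ := Finset.mem_Icc.1 hj
    have hB : (0 : ℝ) ≤ (b : ℝ) ^ (w j) := by positivity
    split_ifs with h
    · have h2 := hge j hj1 h
      have h3 := hmono 1 j le_rfl hj1 hjs
      have h4 : 1 + (b : ℝ) ^ (w j) ≤ R := by nlinarith
      exact mul_le_mul h3 h4 (by positivity) h1.le
    · have h2 := hle j (by omega) hjs
      nlinarith
  have hcard : (Finset.Icc 1 s).filter (fun j => j ≤ j₀) = Finset.Icc 1 j₀ := by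
    ext j
    simp only [Finset.mem_filter, Finset.mem_Icc]
    omega
  calc ∏ j ∈ Finset.Icc 1 s, γ j * (1 + (b : ℝ) ^ (w j))
      ≤ ∏ j ∈ Finset.Icc 1 s, (if j ≤ j₀ then γ 1 else 1) * R := by
        apply Finset.prod_le_prod _ key
        intro j hj
        have := hpos j hj
        positivity
    _ = γ 1 ^ j₀ * R ^ s := by
        rw [Finset.prod_mul_distrib, ← Finset.prod_filter, hcard]
        simp
    _ = κ := by
        rw [hRs]
        field_simp
    _ ≤ κ := le_rfl
end
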